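/- Let X be an undirected graph, let f : Y → X and g : Z → X be coverings such that neither Y nor Z has a loop (no half-arc u with s(u) = t(u)), and let h : Y → Z be a covering with g ∘ h = f. Suppose that for every p ≥ 1 and every covering v : U → X such that U is a p-cycle with an attached forest, postcomposition with h gives a bijection from the set of morphisms u : U → Y with f ∘ u = v to the set of morphisms w : U → Z with g ∘ w = v. Then for every p ≥ 1, the map sending a p-cycle c of Y to h ∘ c restricts to a bijection from the backtrack-free p-cycles of Y to the backtrack-free p-cycles of Z; in particular, when Y and Z are finite they have the same Ihara zeta function. -/

import Mathlib

open CategoryTheory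

namespace Paper

/-- An undirected graph: a set of nodes, a set of half-arcs, source and target maps
and an involution `i` on half-arcs with `s ∘ i = t`. -/
structure UGraph : Type 1 where
  nodes : Type
  half : Type
  s : half → nodes
  t : half → nodes
  inv : half → half
  inv_inv : ∀ a, inv (inv a) = a
  s_inv : ∀ a, s (inv a) = t a

/-- A morphism of undirected graphs: maps on nodes and half-arcs commuting with
source, target and the involution. -/
@[ext]
structure UGraph.Hom (X Y : UGraph) where
  f0 : X.nodes → Y.nodes
  f1 : X.half → Y.half
  comm_s : ∀ a, Y.s (f1 a) = f0 (X.s a)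
  comm_t : ∀ a, Y.t (f1 a) = f0 (X.t a)
  comm_inv : ∀ a, Y.inv (f1 a) = f1 (X.inv a)

/-- The category of undirected graphs. -/
instance : Category UGraph where
  Hom := UGraph.Hom
  id X := ⟨id, id, fun _ => rfl, fun _ => rfl, fun _ => rfl⟩
  comp f g := ⟨g.f0 ∘ f.f0, g.f1 ∘ f.f1,
    fun a => by simp [Function.comp, g.comm_s, f.comm_s],
    fun a => by simp [Function.comp, g.comm_t, f.comm_t],
    fun a => by simp [Function.comp, g.comm_inv, f.comm_inv]⟩

@[simp] theorem UGraph.comp_f0 {X Y Z : UGraph} (f : X ⟶ Y) (g : Y ⟶ Z) :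
    (f ≫ g).f0 = g.f0 ∘ f.f0 := rfl

@[simp] theorem UGraph.comp_f1 {X Y Z : UGraph} (f : X ⟶ Y) (g : Y ⟶ Z) :
    (f ≫ g).f1 = g.f1 ∘ f.f1 := rfl

/-- two nodes are adjacent if some half-arc goes from one to the other. -/
def UGraph.adj (X : UGraph) (x y : X.nodes) : Prop :=
  ∃ u : X.half, X.s u = x ∧ X.t u = y

/-- An undirected graph is connected if any two nodes are joined by a finite
sequence of consecutively incident half-arcs. -/
def UGraph.Connected (X : UGraph) : Prop :=
  ∀ x y : X.nodes, Relation.ReflTransGen X.adj x y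

/-- The undirected `p`-cycle `c^p_U` : nodes `ℤ/pℤ`, half-arcs `[n]⁺ = (n, true)`
and `[n]⁻ = (n, false)` with `s [n]⁺ = [n]`, `t [n]⁺ = [n+1]`, `i [n]⁺ = [n]⁻`. -/
def cycleU (p : ℕ) : UGraph where
  nodes := ZMod p
  half := ZMod p × Bool
  s a := if a.2 then a.1 else a.1 + 1
  t a := if a.2 then a.1 + 1 else a.1
  inv a := (a.1, !a.2)
  inv_inv a := by simp
  s_inv a := by rcases a with ⟨n, _ | _⟩ <;> simp

/-- A `p`-cycle `h : c^p_U ⟶ X` is backtrack-free if `h₁([n+1]⁺) ≠ h₁([n]⁻)` for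
all `n`. -/
def BFree {p : ℕ} {X : UGraph} (h : cycleU p ⟶ X) : Prop :=
  ∀ n : ZMod p, h.f1 (n + 1, true) ≠ h.f1 (n, false)

/-- A morphism of undirected graphs is a covering if it restricts to a bijection on
the half-arcs issued from each node. -/
def IsCovering {X Y : UGraph} (f : X ⟶ Y) : Prop :=
  ∀ x : X.nodes,
    Function.Bijective (fun u : {u : X.half // X.s u = x} =>
      (⟨f.f1 u.1, by rw [f.comm_s, u.2]⟩ : {v : Y.half // Y.s v = f.f0 x}))

end Paper

namespace Paper

/-- `U` is a `p`-cycle with an attached forest via `c : c^p_U ⟶ U`. -/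
def CycleForest (p : ℕ) {U : UGraph} (c : cycleU p ⟶ U) : Prop :=
  U.Connected ∧ Function.Injective c.f0 ∧ Function.Injective c.f1 ∧
    ∀ q : ℕ, 1 ≤ q → ∀ d : cycleU q ⟶ U, BFree d →
      (∀ n : ZMod q, ∃ m : ZMod p, d.f0 n = c.f0 m) ∧
        (∀ a : ZMod q × Bool, ∃ b : ZMod p × Bool, d.f1 a = c.f1 b)

/-!
A backtrack-free cycle `e` of `X` unfolds to a covering of `X` by a cycle with an attached forest:
its nodes are the reduced paths of `X` which start on the cycle and leave it at once. Because
coverings have unique path lifting, for every covering `W` of `X` the lifts of `e` to `W` extend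
uniquely to morphisms over `X` from the unfolding to `W`. The hypothesis on cycles with attached
forests therefore says that `h` is a bijection from the lifts of `e` to `Y` onto the lifts of `e`
to `Z`, and every backtrack-free cycle of `Y` or `Z` is a lift of exactly one such `e`.
-/

namespace UGraph

theorem t_inv (X : UGraph) (a : X.half) : X.t (X.inv a) = X.s a := by
  rw [← X.s_inv, X.inv_inv]

instance adj_symm (X : UGraph) : Std.Symm X.adj where
  symm := by
    rintro _ _ ⟨a, rfl, rfl⟩
    exact ⟨X.inv a, X.s_inv a, X.t_inv a⟩

theorem connected_of_forall_reflTransGen {X : UGraph} {x : X.nodes}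
    (hx : ∀ y, Relation.ReflTransGen X.adj x y) : X.Connected := fun y z =>
  (symm (hx y)).trans (hx z)

theorem Hom.adj_map {X Y : UGraph} (f : X ⟶ Y) {x y : X.nodes} (hxy : X.adj x y) :
    Y.adj (f.f0 x) (f.f0 y) := by
  obtain ⟨a, rfl, rfl⟩ := hxy
  exact ⟨f.f1 a, f.comm_s a, f.comm_t a⟩

end UGraph

section Covering

variable {W X Y Z : UGraph}

theorem IsCovering.eq_of_f1_eq {f : X ⟶ Y} (hf : IsCovering f) {a b : X.half}
    (hs : X.s a = X.s b) (hab : f.f1 a = f.f1 b) : a = b :=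
  congrArg Subtype.val <|
    (hf (X.s b)).injective (a₁ := ⟨a, hs⟩) (a₂ := ⟨b, rfl⟩) (Subtype.ext hab)

theorem IsCovering.exists_f1_eq {f : X ⟶ Y} (hf : IsCovering f) {x : X.nodes} {b : Y.half}
    (hb : Y.s b = f.f0 x) : ∃ a, X.s a = x ∧ f.f1 a = b := by
  obtain ⟨⟨a, ha⟩, hab⟩ := (hf x).surjective ⟨b, hb⟩
  exact ⟨a, ha, congrArg Subtype.val hab⟩

theorem IsCovering.comp {f : X ⟶ Y} {g : Y ⟶ Z} (hf : IsCovering f) (hg : IsCovering g) :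
    IsCovering (f ≫ g) := fun x =>
  (hg (f.f0 x)).comp (hf x)

theorem IsCovering.lift_unique {φ : W ⟶ X} (hφ : IsCovering φ) (hY : Y.Connected)
    {u u' : Y ⟶ W} (huu' : u ≫ φ = u' ≫ φ) {y : Y.nodes} (hy : u.f0 y = u'.f0 y) : u = u' := by
  have f1_eq (a : Y.half) (ha : u.f0 (Y.s a) = u'.f0 (Y.s a)) : u.f1 a = u'.f1 a :=
    hφ.eq_of_f1_eq (by rw [u.comm_s, u'.comm_s, ha]) (congrFun (congrArg UGraph.Hom.f1 huu') a)
  have f0_eq (z : Y.nodes) : u.f0 z = u'.f0 z := by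
    induction hY y z with
    | refl => exact hy
    | tail _ hab ih =>
      obtain ⟨a, rfl, rfl⟩ := hab
      rw [← u.comm_t, ← u'.comm_t, f1_eq a ih]
  exact UGraph.Hom.ext (funext f0_eq) (funext fun a => f1_eq a (f0_eq _))

open Classical in
/-- The target of the lift of the half-arc `a` to the node `w` along `φ`. The value is the junk
`w` when `a` does not lift to a half-arc issued from `w`; for a covering, this means that `a` is
not issued from the image of `w`. -/
noncomputable def transport (φ : W ⟶ X) (w : W.nodes) (a : X.half) : W.nodes :=
  if ha : ∃ b, W.s b = w ∧ φ.f1 b = a then W.t ha.choose else w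

theorem IsCovering.transport_s_f1 {φ : W ⟶ X} (hφ : IsCovering φ) (b : W.half) :
    transport φ (W.s b) (φ.f1 b) = W.t b := by
  have hb : ∃ b', W.s b' = W.s b ∧ φ.f1 b' = φ.f1 b := ⟨b, rfl, rfl⟩
  rw [transport, dif_pos hb, hφ.eq_of_f1_eq hb.choose_spec.1 hb.choose_spec.2]

theorem IsCovering.f0_transport {φ : W ⟶ X} (hφ : IsCovering φ) {w : W.nodes} {a : X.half}
    (ha : X.s a = φ.f0 w) : φ.f0 (transport φ w a) = X.t a := by
  obtain ⟨b, rfl, rfl⟩ := hφ.exists_f1_eq ha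
  rw [hφ.transport_s_f1, φ.comm_t]

end Covering

section Cycle

variable {p : ℕ} {U X Y : UGraph}

theorem cycleU_connected (p : ℕ) : (cycleU p).Connected := by
  refine UGraph.connected_of_forall_reflTransGen (x := (0 : ZMod p)) fun n => ?_
  have adj_succ (m : ZMod p) : (cycleU p).adj m (m + 1 : ZMod p) := ⟨(m, true), rfl, rfl⟩
  have adj_pred (m : ZMod p) : (cycleU p).adj (m + 1 : ZMod p) m := ⟨(m, false), rfl, rfl⟩
  obtain ⟨k, rfl⟩ := ZMod.intCast_surjective n
  induction k with
  | zero => simpa using .refl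
  | succ k ih =>
    rw [Int.cast_add, Int.cast_one]
    exact ih.tail (adj_succ _)
  | pred k ih =>
    exact ih.tail (by simpa using adj_pred ((-(k : ℤ) - 1 : ℤ) : ZMod p))

variable (e : cycleU p ⟶ X) (n : ZMod p)

theorem s_f1_true : X.s (e.f1 (n, true)) = e.f0 n := e.comm_s _

theorem s_f1_false : X.s (e.f1 (n, false)) = e.f0 (n + 1 : ZMod p) := e.comm_s _

theorem t_f1_true : X.t (e.f1 (n, true)) = e.f0 (n + 1 : ZMod p) := e.comm_t _

theorem t_f1_false : X.t (e.f1 (n, false)) = e.f0 n := e.comm_t _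

theorem inv_f1_true : X.inv (e.f1 (n, true)) = e.f1 (n, false) := e.comm_inv _

theorem inv_f1_false : X.inv (e.f1 (n, false)) = e.f1 (n, true) := e.comm_inv _

variable {e n}

theorem BFree.comp {c : cycleU p ⟶ Y} (hc : BFree c) {f : Y ⟶ X} (hf : IsCovering f) :
    BFree (c ≫ f) := fun n hn =>
  hc n (hf.eq_of_f1_eq (by rw [s_f1_true, s_f1_false]) hn)

theorem BFree.of_comp {c : cycleU p ⟶ Y} {f : Y ⟶ X} (hc : BFree (c ≫ f)) : BFree c :=
  fun n hn => hc n (congrArg f.f1 hn)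

theorem BFree.f1_injective (he : BFree e) (hinj : Function.Injective e.f0) :
    Function.Injective e.f1 := by
  rintro ⟨n, σ⟩ ⟨m, τ⟩ hnm
  have hs := hinj <| (e.comm_s (n, σ)).symm.trans <| (congrArg X.s hnm).trans <| e.comm_s (m, τ)
  cases σ <;> cases τ <;> simp only [cycleU, if_true, Bool.false_eq_true, if_false] at hs
  · rw [add_right_cancel hs]
  · subst hs; exact absurd hnm.symm (he n)
  · subst hs; exact absurd hnm (he m)
  · rw [hs]

/-- At a node of maximal height, a cycle of positive height would come in and go out along the
same half-arc. -/
theorem BFree.height_eq_zero [NeZero p] {d : cycleU p ⟶ U} (hd : BFree d) (height : U.nodes → ℕ)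
    (hheight : ∀ a b, U.s a = U.s b → height (U.s a) ≠ 0 → height (U.t a) ≤ height (U.s a) →
      height (U.t b) ≤ height (U.s b) → a = b) (n : ZMod p) : height (d.f0 n) = 0 := by
  obtain ⟨k, hk⟩ := Finite.exists_max fun m : ZMod p => height (d.f0 m)
  obtain ⟨m, rfl⟩ : ∃ m : ZMod p, k = m + 1 := ⟨k - 1, (sub_add_cancel k 1).symm⟩
  suffices hmax : height (d.f0 (m + 1 : ZMod p)) = 0 from Nat.le_zero.mp (hmax ▸ hk n)
  by_contra hpos
  refine hd m (hheight _ _ ?_ ?_ ?_ ?_)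
  · rw [s_f1_true, s_f1_false]
  · rwa [s_f1_true]
  · rw [t_f1_true, s_f1_true]
    exact hk _
  · rw [t_f1_false, s_f1_false]
    exact hk _

end Cycle

/-- An action of the half-arcs of `X` on a set over its nodes, which amounts to a covering of `X`:
`move x a` is the target of the half-arc over `a` issued from `x`, defined when `a` is issued from
the image `proj x`. -/
structure HalfArcAction (X : UGraph) where
  carrier : Type
  proj : carrier → X.nodes
  move : ∀ (x : carrier) (a : X.half), X.s a = proj x → carrier
  proj_move : ∀ x a ha, proj (move x a ha) = X.t a
  move_move_inv : ∀ x a ha, move (move x a ha) (X.inv a) (by rw [X.s_inv, proj_move]) = x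

namespace HalfArcAction

variable {T W X : UGraph} (A : HalfArcAction X)

/-- The total space of the covering: its half-arcs are the pairs `(x, a)` on which the action is
defined. -/
def graph : UGraph where
  nodes := A.carrier
  half := {y : A.carrier × X.half // X.s y.2 = A.proj y.1}
  s y := y.1.1
  t y := A.move y.1.1 y.1.2 y.2
  inv y := ⟨(A.move y.1.1 y.1.2 y.2, X.inv y.1.2), by rw [X.s_inv, A.proj_move]⟩
  inv_inv y := Subtype.ext (Prod.ext (A.move_move_inv _ _ _) (X.inv_inv _))
  s_inv _ := rfl

/-- The projection of the total space to `X`. -/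
def toBase : A.graph ⟶ X where
  f0 := A.proj
  f1 y := y.1.2
  comm_s y := y.2
  comm_t y := (A.proj_move _ _ y.2).symm
  comm_inv _ := rfl

theorem isCovering_toBase : IsCovering A.toBase := by
  refine fun x => ⟨?_, fun ⟨a, ha⟩ => ⟨⟨⟨(x, a), ha⟩, rfl⟩, rfl⟩⟩
  rintro ⟨y, rfl⟩ ⟨z, hz⟩ hyz
  exact Subtype.ext (Subtype.ext (Prod.ext hz.symm (congrArg Subtype.val hyz)))

/-- The lift of `ψ : T ⟶ X` to the total space with given equivariant node map `G`. -/
def liftOf (ψ : T ⟶ X) (G : T.nodes → A.carrier) (hG : ∀ x, A.proj (G x) = ψ.f0 x)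
    (hmove : ∀ b, A.move (G (T.s b)) (ψ.f1 b) (by rw [ψ.comm_s, hG]) = G (T.t b)) :
    T ⟶ A.graph where
  f0 := G
  f1 b := ⟨(G (T.s b), ψ.f1 b), by rw [ψ.comm_s, hG]⟩
  comm_s _ := rfl
  comm_t := hmove
  comm_inv b := Subtype.ext (Prod.ext ((hmove b).trans (congrArg G (T.s_inv b).symm))
    (ψ.comm_inv b))

theorem liftOf_comp_toBase (ψ : T ⟶ X) (G : T.nodes → A.carrier)
    (hG : ∀ x, A.proj (G x) = ψ.f0 x)
    (hmove : ∀ b, A.move (G (T.s b)) (ψ.f1 b) (by rw [ψ.comm_s, hG]) = G (T.t b)) :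
    A.liftOf ψ G hG hmove ≫ A.toBase = ψ :=
  UGraph.Hom.ext (funext hG) rfl

theorem exists_hom_over {φ : W ⟶ X} (hφ : IsCovering φ) (F : A.carrier → W.nodes)
    (hF : ∀ x, φ.f0 (F x) = A.proj x)
    (hmove : ∀ x b (hb : W.s b = F x),
      F (A.move x (φ.f1 b) (by rw [φ.comm_s, hb, hF])) = W.t b) :
    ∃ u : A.graph ⟶ W, u ≫ φ = A.toBase ∧ u.f0 = F := by
  choose F₁ hF₁s hF₁ using fun y : A.graph.half =>
    hφ.exists_f1_eq (x := F y.1.1) (y.2.trans (hF _).symm)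
  have hF₁t (y : A.graph.half) : W.t (F₁ y) = F (A.graph.t y) := by
    rw [← hmove _ _ (hF₁s y)]
    simp only [hF₁, graph]
  refine ⟨⟨F, F₁, hF₁s, hF₁t, fun y => hφ.eq_of_f1_eq ?_ ?_⟩,
    UGraph.Hom.ext (funext hF) (funext hF₁), rfl⟩
  · rw [W.s_inv, hF₁t, hF₁s]
    rfl
  · rw [← φ.comm_inv, hF₁, hF₁]
    rfl

end HalfArcAction

/-- A node of the `p`-cycle followed by a sequence of half-arcs of `X`, the last one outermost. -/
inductive Excursion (p : ℕ) (X : UGraph) : Type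
  | base (n : ZMod p)
  | snoc (x : Excursion p X) (a : X.half)

namespace Excursion

variable {p : ℕ} {W X : UGraph} (e : cycleU p ⟶ X)

/-- The node of `X` reached by an excursion from the cycle `e`. -/
def endpoint : Excursion p X → X.nodes
  | base n => e.f0 n
  | snoc _ a => X.t a

/-- The number of half-arcs of an excursion. -/
def length : Excursion p X → ℕ
  | base _ => 0
  | snoc x _ => x.length + 1

/-- The half-arcs along which an excursion cannot be prolonged: those of the cycle, for an
excursion which has not left the cycle, and the one backtracking on the last step otherwise. -/
inductive IsInward : Excursion p X → X.half → Prop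
  | base_true (n : ZMod p) : IsInward (base n) (e.f1 (n, true))
  | base_false (n : ZMod p) : IsInward (base (n + 1)) (e.f1 (n, false))
  | snoc_inv (x : Excursion p X) (a : X.half) : IsInward (snoc x a) (X.inv a)

/-- The excursions which are paths without backtracking whose first step, if any, leaves the
cycle. -/
def IsReduced : Excursion p X → Prop
  | base _ => True
  | snoc x a => x.IsReduced ∧ X.s a = x.endpoint e ∧ ¬ x.IsInward e a

open Classical in
/-- The reduced excursion obtained by following a half-arc `a` after an excursion, where steps
along the cycle `e` are absorbed in the base node. -/
noncomputable def move : Excursion p X → X.half → Excursion p X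
  | base n, a =>
    if a = e.f1 (n, true) then base (n + 1)
    else if a = e.f1 ((n - 1 : ZMod p), false) then base (n - 1)
    else snoc (base n) a
  | snoc x b, a => if a = X.inv b then x else snoc (snoc x b) a

variable {e}

theorem move_base_true (n : ZMod p) : move e (base n) (e.f1 (n, true)) = base (n + 1) :=
  if_pos rfl

theorem move_base_false (he : BFree e) (n : ZMod p) :
    move e (base (n + 1)) (e.f1 (n, false)) = base n := by
  simp [move, (he n).symm]

theorem move_snoc_inv (x : Excursion p X) (a : X.half) : move e (snoc x a) (X.inv a) = x :=
  if_pos rfl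

theorem move_of_not_isInward {x : Excursion p X} {a : X.half} (ha : ¬ x.IsInward e a) :
    x.move e a = snoc x a := by
  cases x with
  | base n =>
    have ne_true : a ≠ e.f1 (n, true) := by
      rintro rfl
      exact ha (.base_true n)
    have ne_false : a ≠ e.f1 ((n - 1 : ZMod p), false) := by
      rintro rfl
      exact ha (by simpa using IsInward.base_false (e := e) (n - 1))
    rw [move, if_neg ne_true, if_neg ne_false]
  | snoc x b =>
    refine if_neg ?_
    rintro rfl
    exact ha (.snoc_inv x b)

theorem IsReduced.move (he : BFree e) {x : Excursion p X} (hx : x.IsReduced e) {a : X.half}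
    (ha : X.s a = x.endpoint e) : (x.move e a).IsReduced e := by
  by_cases hin : x.IsInward e a
  · cases hin with
    | base_true n => rw [move_base_true]; trivial
    | base_false n => rw [move_base_false he]; trivial
    | snoc_inv x b => rw [move_snoc_inv]; exact hx.1
  · rw [move_of_not_isInward hin]
    exact ⟨hx, ha, hin⟩

theorem IsReduced.endpoint_move (he : BFree e) {x : Excursion p X} (hx : x.IsReduced e)
    (a : X.half) : (x.move e a).endpoint e = X.t a := by
  by_cases hin : x.IsInward e a
  · cases hin with
    | base_true n => rw [move_base_true, t_f1_true, endpoint]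
    | base_false n => rw [move_base_false he, t_f1_false, endpoint]
    | snoc_inv x b => rw [move_snoc_inv, X.t_inv, hx.2.1]
  · rw [move_of_not_isInward hin, endpoint]

theorem IsReduced.move_move_inv (he : BFree e) {x : Excursion p X} (hx : x.IsReduced e)
    (a : X.half) : (x.move e a).move e (X.inv a) = x := by
  by_cases hin : x.IsInward e a
  · cases hin with
    | base_true n => rw [move_base_true, inv_f1_true, move_base_false he]
    | base_false n => rw [move_base_false he, inv_f1_false, move_base_true]
    | snoc_inv x b => rw [move_snoc_inv, X.inv_inv, move_of_not_isInward hx.2.2]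
  · rw [move_of_not_isInward hin, move_snoc_inv]

theorem isInward_of_length_move_le {x : Excursion p X} {a : X.half}
    (hle : (x.move e a).length ≤ x.length) : x.IsInward e a := by
  by_contra hin
  rw [move_of_not_isInward hin, length] at hle
  omega

theorem IsInward.eq_of_length_ne_zero {x : Excursion p X} {a b : X.half} (ha : x.IsInward e a)
    (hb : x.IsInward e b) (hx : x.length ≠ 0) : a = b := by
  cases x with
  | base n => exact absurd rfl hx
  | snoc x c => cases ha; cases hb; rfl

/-- The endpoint of the lift to `W`, along `φ : W ⟶ X`, of an excursion, where the cycle is lifted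
to `κ`. -/
noncomputable def liftEndpoint (φ : W ⟶ X) (κ : cycleU p ⟶ W) : Excursion p X → W.nodes
  | base n => κ.f0 n
  | snoc x a => transport φ (x.liftEndpoint φ κ) a

variable {φ : W ⟶ X} {κ : cycleU p ⟶ W} {x : Excursion p X}

theorem IsReduced.f0_liftEndpoint (hx : x.IsReduced (κ ≫ φ)) (hφ : IsCovering φ) :
    φ.f0 (x.liftEndpoint φ κ) = x.endpoint (κ ≫ φ) := by
  induction x with
  | base n => rfl
  | snoc x a ih => exact hφ.f0_transport (hx.2.1.trans (ih hx.1).symm)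

theorem IsReduced.liftEndpoint_move (hx : x.IsReduced (κ ≫ φ)) (hφ : IsCovering φ)
    (he : BFree (κ ≫ φ)) {b : W.half} (hb : W.s b = x.liftEndpoint φ κ) :
    (x.move (κ ≫ φ) (φ.f1 b)).liftEndpoint φ κ = W.t b := by
  by_cases hin : x.IsInward (κ ≫ φ) (φ.f1 b)
  · generalize ha : φ.f1 b = a at hin ⊢
    cases hin with
    | base_true n =>
      obtain rfl : b = κ.f1 (n, true) := hφ.eq_of_f1_eq (hb.trans (s_f1_true κ n).symm) ha
      rw [move_base_true, t_f1_true, liftEndpoint]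
    | base_false n =>
      obtain rfl : b = κ.f1 (n, false) := hφ.eq_of_f1_eq (hb.trans (s_f1_false κ n).symm) ha
      rw [move_base_false he, t_f1_false, liftEndpoint]
    | snoc_inv x a =>
      obtain ⟨c, hc, rfl⟩ := hφ.exists_f1_eq (hx.2.1.trans (hx.1.f0_liftEndpoint hφ).symm)
      obtain rfl : b = W.inv c := by
        refine hφ.eq_of_f1_eq ?_ (ha.trans (φ.comm_inv c))
        rw [hb, liftEndpoint, ← hc, hφ.transport_s_f1, W.s_inv]
      rw [move_snoc_inv, W.t_inv, hc]
  · rw [move_of_not_isInward hin, liftEndpoint, ← hb, hφ.transport_s_f1]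

end Excursion

section Unfolding

variable {p : ℕ} {W X : UGraph} {e : cycleU p ⟶ X} (he : BFree e)

/-- The unfolding of `X` along a backtrack-free cycle, as an action on reduced excursions: the
cycle with the universal covers of the branches of `X` which leave it attached. -/
noncomputable def unfolding : HalfArcAction X where
  carrier := {x : Excursion p X // x.IsReduced e}
  proj x := x.1.endpoint e
  move x a ha := ⟨x.1.move e a, x.2.move he ha⟩
  proj_move x a _ := x.2.endpoint_move he a
  move_move_inv x a _ := Subtype.ext (x.2.move_move_inv he a)

/-- The tautological lift of the cycle to its unfolding. -/
noncomputable def unfoldingCycle : cycleU p ⟶ (unfolding he).graph :=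
  (unfolding he).liftOf e (fun n => ⟨.base n, trivial⟩) (fun _ => rfl) <| by
    rintro ⟨n, _ | _⟩
    · exact Subtype.ext (Excursion.move_base_false he n)
    · exact Subtype.ext (Excursion.move_base_true n)

theorem unfoldingCycle_comp_toBase : unfoldingCycle he ≫ (unfolding he).toBase = e :=
  HalfArcAction.liftOf_comp_toBase ..

theorem unfolding_connected : (unfolding he).graph.Connected := by
  refine UGraph.connected_of_forall_reflTransGen (x := (unfoldingCycle he).f0 (0 : ZMod p)) ?_
  rintro ⟨x, hx⟩
  induction x with
  | base n =>
    exact (cycleU_connected p (0 : ZMod p) n).lift (unfoldingCycle he).f0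
      fun _ _ => (unfoldingCycle he).adj_map
  | snoc x a ih =>
    exact (ih hx.1).tail
      ⟨⟨(⟨x, hx.1⟩, a), hx.2.1⟩, rfl, Subtype.ext (Excursion.move_of_not_isInward hx.2.2)⟩

theorem unfoldingCycle_f0_injective : Function.Injective (unfoldingCycle he).f0 := fun _ _ hnm =>
  Excursion.base.inj (congrArg Subtype.val hnm)

theorem exists_unfoldingCycle_f0_eq {x : (unfolding he).graph.nodes} (hx : x.1.length = 0) :
    ∃ n : ZMod p, x = (unfoldingCycle he).f0 n := by
  obtain ⟨n | ⟨x, a⟩, hred⟩ := x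
  · exact ⟨n, rfl⟩
  · exact absurd hx (Nat.succ_ne_zero _)

theorem exists_unfoldingCycle_f1_eq {y : (unfolding he).graph.half}
    (hs : ((unfolding he).graph.s y).1.length = 0)
    (ht : ((unfolding he).graph.t y).1.length = 0) :
    ∃ a : ZMod p × Bool, y = (unfoldingCycle he).f1 a := by
  have hin := Excursion.isInward_of_length_move_le (ht.trans_le (Nat.zero_le _))
  obtain ⟨⟨⟨x, hx⟩, a⟩, ha⟩ := y
  cases hin with
  | base_true n => exact ⟨(n, true), rfl⟩
  | base_false n => exact ⟨(n, false), rfl⟩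
  | snoc_inv x b => exact absurd hs (Nat.succ_ne_zero _)

theorem length_eq_zero_of_bFree {q : ℕ} [NeZero q] {d : cycleU q ⟶ (unfolding he).graph}
    (hd : BFree d) (n : ZMod q) : (d.f0 n).1.length = 0 := by
  refine hd.height_eq_zero (fun x => x.1.length) (fun y z hyz hpos hy hz => ?_) n
  refine (unfolding he).isCovering_toBase.eq_of_f1_eq hyz ?_
  have hyin := Excursion.isInward_of_length_move_le hy
  have hzin := Excursion.isInward_of_length_move_le hz
  exact hyin.eq_of_length_ne_zero ((congrArg Subtype.val hyz).symm ▸ hzin) hpos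

theorem cycleForest_unfoldingCycle : CycleForest p (unfoldingCycle he) := by
  have hbfree : BFree (unfoldingCycle he) :=
    .of_comp (f := (unfolding he).toBase) (by rwa [unfoldingCycle_comp_toBase])
  refine ⟨unfolding_connected he, unfoldingCycle_f0_injective he,
    hbfree.f1_injective (unfoldingCycle_f0_injective he), fun q hq d hd => ?_⟩
  have : NeZero q := ⟨by omega⟩
  have hlength := length_eq_zero_of_bFree he hd
  refine ⟨fun n => exists_unfoldingCycle_f0_eq he (hlength n),
    fun (a : (cycleU q).half) => exists_unfoldingCycle_f1_eq he ?_ ?_⟩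
  · rw [d.comm_s]
    exact hlength _
  · rw [d.comm_t]
    exact hlength _

theorem existsUnique_unfolding_hom_over {φ : W ⟶ X} (hφ : IsCovering φ) {κ : cycleU p ⟶ W}
    (hκ : κ ≫ φ = e) :
    ∃! u : (unfolding he).graph ⟶ W,
      u ≫ φ = (unfolding he).toBase ∧ unfoldingCycle he ≫ u = κ := by
  subst hκ
  obtain ⟨u, hu, hu₀⟩ := (unfolding he).exists_hom_over hφ (fun x => x.1.liftEndpoint φ κ)
    (fun x => x.2.f0_liftEndpoint hφ) (fun x b hb => x.2.liftEndpoint_move hφ he hb)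
  refine ⟨u, ⟨hu, ?_⟩, ?_⟩
  · refine hφ.lift_unique (cycleU_connected p) (y := (0 : ZMod p)) ?_ ?_
    · rw [Category.assoc, hu, unfoldingCycle_comp_toBase]
    · rw [UGraph.comp_f0, hu₀]
      rfl
  · rintro u' ⟨hu', hκ'⟩
    refine hφ.lift_unique (unfolding_connected he) (hu'.trans hu.symm)
      (y := (unfoldingCycle he).f0 (0 : ZMod p)) ?_
    rw [hu₀]
    exact congrFun (congrArg UGraph.Hom.f0 hκ') (0 : ZMod p)

end Unfolding

theorem stmt_12_general {X Y Z : UGraph} (g : Z ⟶ X) (hg : IsCovering g) (h : Y ⟶ Z)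
    (hh : IsCovering h) {p : ℕ}
    (hyp : ∀ (U : UGraph) (v : U ⟶ X), IsCovering v →
      (∃ c : cycleU p ⟶ U, CycleForest p c) →
        Function.Bijective (fun u : {u : U ⟶ Y // u ≫ h ≫ g = v} =>
          (⟨u.1 ≫ h, by rw [Category.assoc, u.2]⟩ : {w : U ⟶ Z // w ≫ g = v}))) :
    Function.Bijective (fun c : {c : cycleU p ⟶ Y // BFree c} =>
      (⟨c.1 ≫ h, c.2.comp hh⟩ : {d : cycleU p ⟶ Z // BFree d})) := by
  have hyp_unfolding {e : cycleU p ⟶ X} (he : BFree e) :=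
    hyp _ _ (unfolding he).isCovering_toBase ⟨_, cycleForest_unfoldingCycle he⟩
  constructor
  · rintro ⟨c, hc⟩ ⟨c', hc'⟩ hcc'
    replace hcc' : c ≫ h = c' ≫ h := congrArg Subtype.val hcc'
    have he : BFree (c ≫ h ≫ g) := hc.comp (hh.comp hg)
    have hc'e : c' ≫ h ≫ g = c ≫ h ≫ g := by
      rw [← Category.assoc, ← hcc', Category.assoc]
    obtain ⟨u, ⟨hu, huc⟩, -⟩ := existsUnique_unfolding_hom_over he (hh.comp hg) rfl
    obtain ⟨u', ⟨hu', huc'⟩, -⟩ := existsUnique_unfolding_hom_over he (hh.comp hg) hc'e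
    have huu' : u ≫ h = u' ≫ h :=
      (existsUnique_unfolding_hom_over he hg (κ := c ≫ h) (Category.assoc ..)).unique
        ⟨by rw [Category.assoc, hu], by rw [← Category.assoc, huc]⟩
        ⟨by rw [Category.assoc, hu'], by rw [← Category.assoc, huc', hcc']⟩
    obtain rfl : u = u' := congrArg Subtype.val <|
      (hyp_unfolding he).injective (a₁ := ⟨u, hu⟩) (a₂ := ⟨u', hu'⟩) (Subtype.ext huu')
    exact Subtype.ext (huc.symm.trans huc')
  · rintro ⟨d, hd⟩
    have he : BFree (d ≫ g) := hd.comp hg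
    obtain ⟨w, ⟨hw, hwd⟩, -⟩ := existsUnique_unfolding_hom_over he hg rfl
    obtain ⟨⟨u, hu⟩, huw⟩ := (hyp_unfolding he).surjective ⟨w, hw⟩
    replace huw : u ≫ h = w := congrArg Subtype.val huw
    have hud : (unfoldingCycle he ≫ u) ≫ h = d := by
      rw [Category.assoc, huw, hwd]
    exact ⟨⟨unfoldingCycle he ≫ u, .of_comp (f := h) (by rwa [hud])⟩, Subtype.ext hud⟩

/-- let `f : Y ⟶ X` and `g : Z ⟶ X` be coverings with `Y`, `Z`
loop-free, and `h : Y ⟶ Z` a covering with `g ∘ h = f`.  If for every `p ≥ 1` and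
every covering `v : U ⟶ X` by a `p`-cycle with an attached forest, postcomposition
with `h` is a bijection between morphisms `U ⟶ Y` over `X` and morphisms `U ⟶ Z`
over `X`, then `h` induces a bijection between backtrack-free `p`-cycles of `Y` and
of `Z` for every `p ≥ 1`; in particular, when `Y` and `Z` are finite they have the
same Ihara zeta function (the same number of backtrack-free `p`-cycles for all `p`). -/
theorem stmt_12 {X Y Z : UGraph} (f : Y ⟶ X) (g : Z ⟶ X)
    (hf : IsCovering f) (hg : IsCovering g)
    (hYnoloop : ∀ u : Y.half, Y.s u ≠ Y.t u)
    (hZnoloop : ∀ u : Z.half, Z.s u ≠ Z.t u)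
    (h : Y ⟶ Z) (hh : IsCovering h) (hcomm : h ≫ g = f)
    (hyp : ∀ (p : ℕ), 1 ≤ p → ∀ (U : UGraph) (v : U ⟶ X), IsCovering v →
      (∃ c : cycleU p ⟶ U, CycleForest p c) →
        Function.Bijective (fun u : {u : U ⟶ Y // u ≫ f = v} =>
          (⟨u.1 ≫ h, by rw [Category.assoc, hcomm, u.2]⟩ : {w : U ⟶ Z // w ≫ g = v}))) :
    (∀ p : ℕ, 1 ≤ p →
        ∃ H : ∀ c : cycleU p ⟶ Y, BFree c → BFree (c ≫ h),
          Function.Bijective (fun c : {c : cycleU p ⟶ Y // BFree c} =>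
            (⟨c.1 ≫ h, H c.1 c.2⟩ : {d : cycleU p ⟶ Z // BFree d}))) ∧
      (Finite Y.nodes → Finite Y.half → Finite Z.nodes → Finite Z.half →
        ∀ p : ℕ, 1 ≤ p →
          Nat.card {c : cycleU p ⟶ Y // BFree c} =
            Nat.card {d : cycleU p ⟶ Z // BFree d}) := by
  subst hcomm
  have bijective (p : ℕ) (hp : 1 ≤ p) := stmt_12_general g hg h hh (hyp p hp)
  exact ⟨fun p hp => ⟨fun _ hc => hc.comp hh, bijective p hp⟩,
    fun _ _ _ _ p hp => Nat.card_congr (.ofBijective _ (bijective p hp))⟩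

end Paper
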